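/- Fix positive reals α, h̄, c̄, ρ̄_s, s, e, m, n, T = tanθ, assume K = 0, and let η ≠ 0 be real. Then 0 is an eigenvalue of A(0,η), and A(0,η) has an eigenvalue with strictly positive real part if and only if m·c̄ > ρ̄_s. -/

import Mathlib

/-- The Fourier symbol `A(ξ,η) = A₀ + iξ·A₁ − (ξ²+η²)·A₂` of the linearized
landscape evolution system about the constant state `(h̄, c̄, 0)`, with
`a = s·ρ̄ₛ/(e·h̄)` and slope parameter `T = tan θ`. -/
noncomputable def landA (α hb cb ρs s e m n T K : ℝ) (ξ η : ℝ) :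
    Matrix (Fin 3) (Fin 3) ℂ :=
  ((!![0, 0, 0;
       (s * ρs / (e * hb)) * m * cb / hb, -(s * ρs / (e * hb)), 0;
       -((s * ρs / (e * hb)) * m * cb / ρs), (s * ρs / (e * hb)) * hb / ρs, 0] :
      Matrix (Fin 3) (Fin 3) ℝ).map Complex.ofReal)
  + (Complex.I * (ξ : ℂ)) •
    ((!![-T, 0, 0;
         -(α * (s * ρs / (e * hb)) * n * cb / T), -T,
           -(α * (s * ρs / (e * hb)) * n * cb / T);
         α * (s * ρs / (e * hb)) * n * hb * cb / (ρs * T), 0,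
           α * (s * ρs / (e * hb)) * n * hb * cb / (ρs * T)] :
        Matrix (Fin 3) (Fin 3) ℝ).map Complex.ofReal)
  - (((ξ ^ 2 + η ^ 2 : ℝ) : ℂ)) •
    ((!![α * hb, 0, α * hb; 0, 0, 0; 0, 0, K] :
        Matrix (Fin 3) (Fin 3) ℝ).map Complex.ofReal)

/-- Spectral stability: every eigenvalue (root of the characteristic
polynomial) has strictly negative real part. -/
def SpectrallyStable (A : Matrix (Fin 3) (Fin 3) ℂ) : Prop :=
  ∀ z : ℂ, A.charpoly.IsRoot z → z.re < 0

/-!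
Write `q = α h̄ η²` and `r = m c̄ / ρ̄ₛ`. Sediment exchange conserves mass: at `ξ = 0`, `h̄` times
the second row of the symbol plus `ρ̄ₛ` times the third vanishes up to creep. So without creep the
characteristic polynomial has the factor `z`, and the other factor is `(z + q) (z + a) - q a r`.
This is a real quadratic with positive linear coefficient, so a root in the right half-plane has to
be real, and there is one exactly when the constant coefficient `q a (1 - r)` is negative.
-/

section Quadratic

variable {p b : ℝ}

theorem im_eq_zero_of_sq_add_mul_add_eq_zero {z : ℂ} (hp : 0 ≤ p) (hre : 0 < z.re)
    (hz : z ^ 2 + p * z + b = 0) : z.im = 0 := by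
  have him : z.im * (2 * z.re + p) = 0 := by
    have h := congrArg Complex.im hz
    simp only [pow_two, Complex.add_im, Complex.mul_im, Complex.ofReal_re, Complex.ofReal_im,
      Complex.zero_im] at h
    linarith
  exact (mul_eq_zero.mp him).resolve_right (by positivity)

theorem exists_pos_sq_add_mul_add_eq_zero_iff (hp : 0 ≤ p) :
    (∃ x : ℝ, 0 < x ∧ x ^ 2 + p * x + b = 0) ↔ b < 0 := by
  constructor
  · rintro ⟨x, hx, hroot⟩
    have : 0 < x ^ 2 + p * x := by positivity
    linarith
  · intro hb
    have hsqrt : p < √(p ^ 2 - 4 * b) := Real.lt_sqrt_of_sq_lt (by linarith)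
    have hsq : √(p ^ 2 - 4 * b) ^ 2 = p ^ 2 - 4 * b := Real.sq_sqrt (by nlinarith)
    exact ⟨(-p + √(p ^ 2 - 4 * b)) / 2, by linarith, by linear_combination hsq / 4⟩

theorem exists_re_pos_sq_add_mul_add_eq_zero_iff (hp : 0 ≤ p) :
    (∃ z : ℂ, z ^ 2 + p * z + b = 0 ∧ 0 < z.re) ↔ b < 0 := by
  rw [← exists_pos_sq_add_mul_add_eq_zero_iff hp]
  constructor
  · rintro ⟨z, hz, hre⟩
    lift z to ℝ using im_eq_zero_of_sq_add_mul_add_eq_zero hp hre hz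
    exact ⟨z, hre, mod_cast hz⟩
  · rintro ⟨x, hx, hroot⟩
    exact ⟨x, mod_cast hroot, hx⟩

end Quadratic

theorem exists_re_pos_add_mul_add_eq_iff {q a c : ℝ} (hqa : 0 ≤ q + a) :
    (∃ z : ℂ, (z + q) * (z + a) = c ∧ 0 < z.re) ↔ q * a < c := by
  have expand (z : ℂ) :
      (z + q) * (z + a) = c ↔ z ^ 2 + (q + a : ℝ) * z + (q * a - c : ℝ) = 0 := by
    rw [← sub_eq_zero]
    push_cast
    ring_nf
  simp only [expand, exists_re_pos_sq_add_mul_add_eq_zero_iff hqa, sub_neg]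

section Transverse

open Polynomial

theorem charpoly_fin_three_of_mul_eq_mul {R : Type*} [CommRing R] {q a k u v w : R}
    (h : u * v = a * w) :
    (!![-q, 0, -q; u, -a, 0; -w, v, -k] : Matrix (Fin 3) (Fin 3) R).charpoly =
      (X + C q) * (X + C a) * (X + C k) - C (q * w) * X := by
  have hC : (C u * C v : R[X]) = C a * C w := by rw [← C_mul, h, C_mul]
  have charmatrix_eq :
      (!![-q, 0, -q; u, -a, 0; -w, v, -k] : Matrix (Fin 3) (Fin 3) R).charmatrix =
        !![X + C q, 0, C q; -C u, X + C a, 0; C w, -C v, X + C k] := by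
    ext1 i j
    fin_cases i <;> fin_cases j <;> simp
  rw [Matrix.charpoly, charmatrix_eq, Matrix.det_fin_three]
  simp only [Matrix.of_apply, Matrix.cons_val]
  rw [C_mul]
  linear_combination C q * hC

variable {α hb cb ρs s e m n T K η : ℝ}

theorem landA_transverse_eq_map :
    landA α hb cb ρs s e m n T K 0 η =
      (!![-(α * hb * η ^ 2), 0, -(α * hb * η ^ 2);
          (s * ρs / (e * hb)) * m * cb / hb, -(s * ρs / (e * hb)), 0;
          -((s * ρs / (e * hb)) * m * cb / ρs), (s * ρs / (e * hb)) * hb / ρs, -(K * η ^ 2)] :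
        Matrix (Fin 3) (Fin 3) ℝ).map Complex.ofRealHom := by
  ext i j
  fin_cases i <;> fin_cases j <;> simp [landA, mul_comm]

theorem charpoly_landA_transverse (hhb : hb ≠ 0) :
    (landA α hb cb ρs s e m n T K 0 η).charpoly =
      ((X + C (α * hb * η ^ 2)) * (X + C (s * ρs / (e * hb))) * (X + C (K * η ^ 2)) -
        C (α * hb * η ^ 2 * (s * ρs / (e * hb) * m * cb / ρs)) * X).map Complex.ofRealHom := by
  have mass_balance (a : ℝ) : a * m * cb / hb * (a * hb / ρs) = a * (a * m * cb / ρs) := by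
    field_simp
  rw [landA_transverse_eq_map, Matrix.charpoly_map,
    charpoly_fin_three_of_mul_eq_mul (mass_balance _)]

theorem isRoot_charpoly_landA_transverse_no_creep_iff (hhb : hb ≠ 0) {z : ℂ} :
    (landA α hb cb ρs s e m n T 0 0 η).charpoly.IsRoot z ↔
      z = 0 ∨ (z + (α * hb * η ^ 2 : ℝ)) * (z + (s * ρs / (e * hb) : ℝ)) =
        (α * hb * η ^ 2 * (s * ρs / (e * hb)) * (m * cb / ρs) : ℝ) := by
  rw [← sub_eq_zero (b := Complex.ofReal _), or_comm, ← mul_eq_zero, Polynomial.IsRoot,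
    charpoly_landA_transverse hhb]
  refine Eq.congr_left ?_
  simp only [eval_map, eval₂_sub, eval₂_mul, eval₂_add, eval₂_X, eval₂_C,
    Complex.ofRealHom_eq_coe]
  push_cast
  ring

end Transverse

/-- When `K = 0` and `η ≠ 0`, `0` is an eigenvalue of `A(0,η)`, and `A(0,η)`
has an eigenvalue with strictly positive real part iff `m c̄ > ρ̄ₛ`. -/
theorem transverse_no_creep_instability (α hb cb ρs s e m n T : ℝ)
    (hα : 0 < α) (hhb : 0 < hb) (hcb : 0 < cb) (hρs : 0 < ρs)
    (hs : 0 < s) (he : 0 < e) (hm : 0 < m) (hn : 0 < n) (hT : 0 < T)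
    (η : ℝ) (hη : η ≠ 0) :
    (landA α hb cb ρs s e m n T 0 0 η).charpoly.IsRoot 0 ∧
    ((∃ z : ℂ, (landA α hb cb ρs s e m n T 0 0 η).charpoly.IsRoot z ∧
        0 < z.re) ↔ m * cb > ρs) := by
  have hq : 0 < α * hb * η ^ 2 := by positivity
  have ha : 0 < s * ρs / (e * hb) := by positivity
  refine ⟨(isRoot_charpoly_landA_transverse_no_creep_iff hhb.ne').2 (.inl rfl), ?_⟩
  have ne_zero_of_re_pos {z : ℂ} (hre : 0 < z.re) : z ≠ 0 := by
    rintro rfl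
    exact hre.false
  calc
    _ ↔ ∃ z : ℂ, (z + (α * hb * η ^ 2 : ℝ)) * (z + (s * ρs / (e * hb) : ℝ)) =
          (α * hb * η ^ 2 * (s * ρs / (e * hb)) * (m * cb / ρs) : ℝ) ∧ 0 < z.re :=
      exists_congr fun z ↦ and_congr_left fun hre ↦
        (isRoot_charpoly_landA_transverse_no_creep_iff hhb.ne').trans
          (or_iff_right (ne_zero_of_re_pos hre))
    _ ↔ α * hb * η ^ 2 * (s * ρs / (e * hb)) <
          α * hb * η ^ 2 * (s * ρs / (e * hb)) * (m * cb / ρs) :=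
      exists_re_pos_add_mul_add_eq_iff (add_pos hq ha).le
    _ ↔ 1 < m * cb / ρs := lt_mul_iff_one_lt_right (mul_pos hq ha)
    _ ↔ m * cb > ρs := one_lt_div hρs
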